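/- arXiv:1912.02369 — 3 statements merged into one kernel-verified Lean document; each statement's English description precedes it below -/
import Mathlib

section
/- Let Γ ≤ GL(3,ℂ) be a discrete subgroup all of whose elements are upper triangular. For x, y ∈ ℂ let g_{x,y} be the matrix with rows (1, x, y), (0, 1, 0), (0, 0, 1), and for (x,y) ≠ (0,0) let ℓ_{x,y} ⊆ ℂ³ be the 2-dimensional subspace spanned by (1,0,0) and (0, −y, x). Let 𝒞 be the union of the sets ℓ_{x,y} over all pairs (x,y) ≠ (0,0) with g_{x,y} ∈ Γ. Then every γ ∈ Γ leaves 𝒞 invariant: the image of 𝒞 under the linear map γ equals 𝒞. -/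
/-- The cone `𝒞(Γ)` of a subgroup `Γ ≤ GL(3, ℂ)`: the union, over the pairs
`(x, y) ≠ (0, 0)` such that the unipotent matrix `g_{x,y}` (rows `(1,x,y)`, `(0,1,0)`,
`(0,0,1)`) belongs to `Γ`, of the planes `ℓ_{x,y} = span{(1,0,0), (0,−y,x)}` of `ℂ³`. -/
def cone (Γ : Subgroup (Matrix.GeneralLinearGroup (Fin 3) ℂ)) : Set (Fin 3 → ℂ) :=
  ⋃ p ∈ {q : ℂ × ℂ | q ≠ 0 ∧
      ∃ g ∈ Γ, (g : Matrix (Fin 3) (Fin 3) ℂ) = !![1, q.1, q.2; 0, 1, 0; 0, 0, 1]},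
    (Submodule.span ℂ {![1, 0, 0], ![0, -p.2, p.1]} : Set (Fin 3 → ℂ))

/-!
The plane `ℓ_{x,y}` is the space of fixed vectors of `g_{x,y}`, and the matrices `g_{x,y}` are
exactly those acting trivially both on the line `ℂ e₀` and on the quotient `ℂ³ / ℂ e₀`. Thus
`𝒞(Γ)` is the set of vectors fixed by some nontrivial element of the subgroup `Core(Γ)`. This
description is natural under conjugation: `γ` maps the vectors fixed by `g` to those fixed by
`γ g γ⁻¹`, and it normalizes `Core(Γ)` as soon as it normalizes `Γ` and preserves `ℂ e₀`.
-/

open scoped Matrix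

section NonfreeLocus

variable {G : Type*} [Group G]

/-- The points of a `G`-set `α` at which the action of the subgroup `K` fails to be free, that is,
the points fixed by some nontrivial element of `K`. -/
def nonfreeLocus (α : Type*) [MulAction G α] (K : Subgroup G) : Set α :=
  {a | ∃ g ∈ K, g ≠ 1 ∧ g • a = a}

theorem smul_mem_nonfreeLocus_iff {α : Type*} [MulAction G α] {K : Subgroup G} {γ : G}
    (hγ : γ ∈ Subgroup.normalizer K) {a : α} : γ • a ∈ nonfreeLocus α K ↔ a ∈ nonfreeLocus α K := by
  refine (MulAut.conj γ).surjective.exists.trans <| exists_congr fun g ↦ ?_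
  rw [MulAut.conj_apply, ← Subgroup.mem_normalizer_iff.mp hγ g, Ne, Ne, conj_eq_one_iff, mul_smul,
    mul_smul, inv_smul_smul, smul_left_cancel_iff]

end NonfreeLocus

section ElationGroup

variable {G R V : Type*} [Group G] [Ring R] [AddCommGroup V] [Module R V] [DistribMulAction G V]

/-- The subgroup of the elements of `G` acting trivially on the submodule `L` and on the quotient
`V ⧸ L`. When `L` is a line, these act on the projective space of `V` as elations with centre `L`;
for the line `ℂ e₀` of `ℂ³` and a group `Γ` of matrices, the paper's `Core(Γ)` is the intersection
of `Γ` with this subgroup of `GL(3, ℂ)`. -/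
def elationGroup (G : Type*) [Group G] [DistribMulAction G V] (L : Submodule R V) :
    Subgroup G where
  carrier := {g | (∀ v ∈ L, g • v = v) ∧ ∀ v : V, g • v - v ∈ L}
  one_mem' := by simp
  mul_mem' := by
    rintro g h ⟨hgL, hg⟩ ⟨hhL, hh⟩
    refine ⟨fun v hv ↦ by rw [mul_smul, hhL v hv, hgL v hv], fun v ↦ ?_⟩
    simpa only [mul_smul, sub_add_sub_cancel] using L.add_mem (hg (h • v)) (hh v)
  inv_mem' := by
    rintro g ⟨hgL, hg⟩
    refine ⟨fun v hv ↦ inv_smul_eq_iff.mpr (hgL v hv).symm, fun v ↦ ?_⟩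
    simpa only [smul_inv_smul, neg_sub] using L.neg_mem (hg (g⁻¹ • v))

theorem mem_elationGroup_iff {L : Submodule R V} {g : G} :
    g ∈ elationGroup G L ↔ (∀ v ∈ L, g • v = v) ∧ ∀ v : V, g • v - v ∈ L :=
  Iff.rfl

theorem mem_normalizer_elationGroup {L : Submodule R V} {γ : G}
    (hL : ∀ v, γ • v ∈ L ↔ v ∈ L) : γ ∈ Subgroup.normalizer (elationGroup G L) := by
  refine Subgroup.mem_normalizer_iff.mpr fun g ↦ and_congr ?_ ?_
  · refine Iff.trans ?_ (MulAction.surjective γ).forall.symm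
    simp only [hL, mul_smul, inv_smul_smul, smul_left_cancel_iff]
  · refine Iff.trans ?_ (MulAction.surjective γ).forall.symm
    simp only [mul_smul, inv_smul_smul, ← smul_sub, hL]

end ElationGroup

section Coordinates

variable {n R : Type*} [DecidableEq n] [CommRing R]

theorem mem_span_single_one_iff {j : n} {v : n → R} :
    v ∈ Submodule.span R {(Pi.single j 1 : n → R)} ↔ ∀ i ≠ j, v i = 0 := by
  rw [Submodule.mem_span_singleton]
  refine ⟨?_, fun h ↦ ⟨v j, funext fun i ↦ ?_⟩⟩
  · rintro ⟨c, rfl⟩ i hij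
    simp [hij]
  · by_cases hij : i = j
    · simp [hij]
    · simp [hij, h i hij]

theorem mem_elationGroup_span_single_one_iff [Fintype n] {j : n}
    {g : Matrix.GeneralLinearGroup n R} :
    g ∈ elationGroup _ (Submodule.span R {(Pi.single j 1 : n → R)}) ↔
      ∀ i k, i ≠ j ∨ k = j → (g : Matrix n n R) i k = (1 : Matrix n n R) i k := by
  have entry_eq (k i : n) : (g • (Pi.single k 1 : n → R)) i = (g : Matrix n n R) i k := by
    simp [Units.smul_def]
  simp only [mem_elationGroup_iff, mem_span_single_one_iff ]
  refine ⟨fun ⟨hfix, hquot⟩ i k hik ↦ ?_, fun h ↦ ⟨fun v hv ↦ ?_, fun v i hij ↦ ?_⟩⟩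
  · rw [← entry_eq, Matrix.one_apply, ← Pi.single_apply]
    rcases hik with hij | rfl
    · exact sub_eq_zero.mp (hquot (Pi.single k 1) i hij)
    · rw [hfix _ fun i hik ↦ Pi.single_eq_of_ne hik 1]
  · obtain ⟨c, rfl⟩ := Submodule.mem_span_singleton.mp (mem_span_single_one_iff.mpr hv)
    rw [smul_comm]
    congr 1
    ext i
    rw [entry_eq, h i j (.inr rfl), Matrix.one_apply, Pi.single_apply]
  · simp [Units.smul_def, Matrix.mulVec, dotProduct, h i _ (.inl hij), Matrix.one_apply]

theorem mem_elationGroup_span_single_zero_iff {g : Matrix.GeneralLinearGroup (Fin 3) R} :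
    g ∈ elationGroup _ (Submodule.span R {(Pi.single 0 1 : Fin 3 → R)}) ↔
      ∃ x y : R, (g : Matrix (Fin 3) (Fin 3) R) = !![1, x, y; 0, 1, 0; 0, 0, 1] := by
  rw [mem_elationGroup_span_single_one_iff]
  refine ⟨fun h ↦ ⟨g 0 1, g 0 2, ?_⟩, ?_⟩
  · ext i k
    fin_cases i <;> fin_cases k <;> simp [h]
  · rintro ⟨x, y, hg⟩ i k
    rw [hg]
    fin_cases i <;> fin_cases k <;> simp

theorem unipotent_mulVec_eq_self_iff {x y : R} {v : Fin 3 → R} :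
    !![1, x, y; 0, 1, 0; 0, 0, 1] *ᵥ v = v ↔ x * v 1 + y * v 2 = 0 := by
  simp [funext_iff, Fin.forall_fin_succ, Matrix.vecHead, Matrix.vecTail]

end Coordinates

section Field

variable {K : Type*} [Field K]

theorem smul_mem_span_singleton_iff {G V : Type*} [Group G] [AddCommGroup V] [Module K V]
    [DistribMulAction G V] [SMulCommClass G K V] {γ : G} {e : V} {a : K} (ha : a ≠ 0)
    (heigen : γ • e = a • e) {v : V} :
    γ • v ∈ Submodule.span K {e} ↔ v ∈ Submodule.span K {e} := by
  simp only [Submodule.mem_span_singleton]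
  constructor
  · rintro ⟨c, hc⟩
    refine ⟨c * a⁻¹, smul_left_cancel γ ?_⟩
    rw [smul_comm, heigen, smul_smul, inv_mul_cancel_right₀ ha, hc]
  · rintro ⟨c, rfl⟩
    exact ⟨c * a, by rw [smul_comm, heigen, mul_smul]⟩

theorem smul_mem_span_single_one_iff {n : Type*} [Fintype n] [DecidableEq n]
    {γ : Matrix.GeneralLinearGroup n K} {j : n} (hcol : ∀ i ≠ j, (γ : Matrix n n K) i j = 0)
    {v : n → K} :
    γ • v ∈ Submodule.span K {(Pi.single j 1 : n → K)} ↔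
      v ∈ Submodule.span K {(Pi.single j 1 : n → K)} := by
  have heigen : γ • (Pi.single j 1 : n → K) = (γ : Matrix n n K) j j • Pi.single j 1 := by
    ext i
    by_cases hij : i = j <;> simp [Units.smul_def, hij, hcol]
  have hne : (γ : Matrix n n K) j j ≠ 0 := by
    intro h
    simp [h, smul_eq_zero_iff_eq] at heigen
  exact smul_mem_span_singleton_iff hne heigen

theorem mem_span_pair_iff_mul_add_mul_eq_zero {x y : K} (hxy : (x, y) ≠ 0) {v : Fin 3 → K} :
    v ∈ Submodule.span K {![1, 0, 0], ![0, -y, x]} ↔ x * v 1 + y * v 2 = 0 := by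
  rw [Submodule.mem_span_pair]
  refine ⟨?_, fun h ↦ ?_⟩
  · rintro ⟨a, b, rfl⟩
    simp only [Pi.add_apply, Pi.smul_apply, Matrix.cons_val, smul_eq_mul]
    ring
  · obtain hx | hy : x ≠ 0 ∨ y ≠ 0 := by simpa [or_iff_not_imp_left] using hxy
    · refine ⟨v 0, v 2 / x, ?_⟩
      have : v 2 / x * -y = v 1 := by field_simp; linear_combination -h
      ext i
      fin_cases i <;> simp [this, hx]
    · refine ⟨v 0, -v 1 / y, ?_⟩
      have : -v 1 / y * x = v 2 := by field_simp; linear_combination -h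
      ext i
      fin_cases i <;> simp [this, hy]

end Field

theorem cone_eq_nonfreeLocus (Γ : Subgroup (Matrix.GeneralLinearGroup (Fin 3) ℂ)) :
    cone Γ = nonfreeLocus (Fin 3 → ℂ)
      (Γ ⊓ elationGroup _ (Submodule.span ℂ {(Pi.single 0 1 : Fin 3 → ℂ)})) := by
  have eq_one_iff {g : Matrix.GeneralLinearGroup (Fin 3) ℂ} {x y : ℂ}
      (hg : (g : Matrix (Fin 3) (Fin 3) ℂ) = !![1, x, y; 0, 1, 0; 0, 0, 1]) :
      g = 1 ↔ (x, y) = 0 := by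
    simp [Units.ext_iff, hg, Matrix.one_fin_three]
  have smul_eq_iff {g : Matrix.GeneralLinearGroup (Fin 3) ℂ} {x y : ℂ} (hxy : (x, y) ≠ 0)
      (hg : (g : Matrix (Fin 3) (Fin 3) ℂ) = !![1, x, y; 0, 1, 0; 0, 0, 1]) (v : Fin 3 → ℂ) :
      g • v = v ↔ v ∈ Submodule.span ℂ {![1, 0, 0], ![0, -y, x]} := by
    rw [mem_span_pair_iff_mul_add_mul_eq_zero hxy, ← unipotent_mulVec_eq_self_iff, ← hg,
      Units.smul_def, Matrix.smul_eq_mulVec]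
  ext v
  simp only [cone, nonfreeLocus, Set.mem_iUnion, Set.mem_ofPred_eq, SetLike.mem_coe, exists_prop]
  constructor
  · rintro ⟨⟨x, y⟩, ⟨hxy, g, hgΓ, hg⟩, hv⟩
    exact ⟨g, ⟨hgΓ, mem_elationGroup_span_single_zero_iff.mpr ⟨x, y, hg⟩⟩,
      (eq_one_iff hg).not.mpr hxy, (smul_eq_iff hxy hg v).mpr hv⟩
  · rintro ⟨g, ⟨hgΓ, hgE⟩, hne, hv⟩
    obtain ⟨x, y, hg⟩ := mem_elationGroup_span_single_zero_iff.mp hgE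
    have hxy : (x, y) ≠ 0 := (eq_one_iff hg).not.mp hne
    exact ⟨(x, y), ⟨hxy, g, hgΓ, hg⟩, (smul_eq_iff hxy hg v).mp hv⟩

theorem stmt_17_general (Γ : Subgroup (Matrix.GeneralLinearGroup (Fin 3) ℂ))
    {γ : Matrix.GeneralLinearGroup (Fin 3) ℂ} (hγ : γ ∈ Subgroup.normalizer Γ)
    (hcol : ∀ i ≠ 0, (γ : Matrix (Fin 3) (Fin 3) ℂ) i 0 = 0) :
    (γ : Matrix (Fin 3) (Fin 3) ℂ).mulVec '' cone Γ = cone Γ := by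
  have hcore := Subgroup.inf_normalizer_le_normalizer_inf
    ⟨hγ, mem_normalizer_elationGroup fun _ ↦ smul_mem_span_single_one_iff hcol⟩
  have hpreimage : (γ : Matrix (Fin 3) (Fin 3) ℂ).mulVec ⁻¹' cone Γ = cone Γ := by
    rw [cone_eq_nonfreeLocus]
    exact Set.ext fun v ↦ smul_mem_nonfreeLocus_iff hcore
  calc
    (γ : Matrix (Fin 3) (Fin 3) ℂ).mulVec '' cone Γ
      = (γ : Matrix (Fin 3) (Fin 3) ℂ).mulVec '' (_ ⁻¹' cone Γ) := by rw [hpreimage]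
    _ = cone Γ := Set.image_preimage_eq _ (MulAction.surjective γ)

/-- If `Γ ≤ GL(3, ℂ)` is a discrete subgroup of upper triangular matrices, then every
`γ ∈ Γ` leaves the cone `𝒞(Γ)` invariant: the image of `𝒞(Γ)` under the linear map `γ`
equals `𝒞(Γ)`. -/
theorem stmt_17 (Γ : Subgroup (Matrix.GeneralLinearGroup (Fin 3) ℂ))
    (hdisc : DiscreteTopology Γ)
    (hupper : ∀ γ ∈ Γ, ∀ i j : Fin 3, j < i → (γ : Matrix (Fin 3) (Fin 3) ℂ) i j = 0) :
    ∀ γ ∈ Γ, (γ : Matrix (Fin 3) (Fin 3) ℂ).mulVec '' cone Γ = cone Γ :=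
  fun γ hγ ↦ stmt_17_general Γ (Subgroup.le_normalizer hγ)
    fun i hi ↦ hupper γ hγ i 0 (Fin.pos_of_ne_zero hi)
end

section
/- Let Γ ≤ SL(3,ℂ) be a discrete subgroup whose action on the projective plane ℙ(ℂ³) is strongly irreducible, meaning that no finite-index subgroup of Γ leaves invariant a linear subspace V of ℂ³ with 0 < dim V < 3, and suppose Γ is a complex Kleinian group, i.e. there is a nonempty open Γ-invariant subset U of ℙ(ℂ³) on which the induced action of Γ is properly discontinuous (for every compact K ⊆ U, the set of γ ∈ Γ with γ·K ∩ K ≠ ∅ is finite). Then Γ contains a free subgroup of rank 2: there exist a, b ∈ Γ such that the subgroup they generate is free on {a, b}. -/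
noncomputable instance : TopologicalSpace (Matrix.SpecialLinearGroup (Fin 3) ℂ) :=
  inferInstanceAs (TopologicalSpace {A : Matrix (Fin 3) (Fin 3) ℂ // A.det = 1})

/-- The quotient topology on the complex projective plane `ℙ(ℂ³)`. -/
noncomputable instance : TopologicalSpace (Projectivization ℂ (Fin 3 → ℂ)) :=
  inferInstanceAs (TopologicalSpace (Quotient (projectivizationSetoid ℂ (Fin 3 → ℂ))))

lemma slToLin'_injective (g : Matrix.SpecialLinearGroup (Fin 3) ℂ) :
    Function.Injective (Matrix.toLin' (g : Matrix (Fin 3) (Fin 3) ℂ)) := by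
  have hinv : ((g⁻¹ : Matrix.SpecialLinearGroup (Fin 3) ℂ) : Matrix (Fin 3) (Fin 3) ℂ) *
      (g : Matrix (Fin 3) (Fin 3) ℂ) = 1 := by
    rw [← Matrix.SpecialLinearGroup.coe_mul]
    simp
  have h : Function.LeftInverse
      (Matrix.toLin' ((g⁻¹ : Matrix.SpecialLinearGroup (Fin 3) ℂ) : Matrix (Fin 3) (Fin 3) ℂ))
      (Matrix.toLin' (g : Matrix (Fin 3) (Fin 3) ℂ)) := by
    intro v
    rw [Matrix.toLin'_apply, Matrix.toLin'_apply, Matrix.mulVec_mulVec, hinv,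
      Matrix.one_mulVec]
  exact h.injective

/-- The induced action of an element of `SL(3, ℂ)` on the projective plane `ℙ(ℂ³)`. -/
noncomputable def projAct (g : Matrix.SpecialLinearGroup (Fin 3) ℂ) :
    Projectivization ℂ (Fin 3 → ℂ) → Projectivization ℂ (Fin 3 → ℂ) :=
  Projectivization.map (Matrix.toLin' (g : Matrix (Fin 3) (Fin 3) ℂ)) (slToLin'_injective g)

/-!
Rescaling `g` and `g⁻¹` separately along an unbounded sequence in a discrete group gives a pair of
nonzero limits `A` and `B`. Determinant one forces `A * B = 0`, so in dimension at most three one of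
the two has rank one, say `A`. For generic `k` the elements `g k g⁻¹` and their inverses then tend
projectively to nonzero matrices `A k B` and `A k⁻¹ B`, both of rank one with the image of `A`.

Strong irreducibility supplies the generic elements: in the Zariski topology, which is Noetherian,
the conditions `φ (g v) ≠ 0` with `φ, v ≠ 0` hold at the general point of an irreducible component,
because the stabilizer of a component has finite index. Multiplying the rank one limits by generic
elements puts the attracting points outside the repelling hyperplanes, and elements close to the
limits play ping-pong.
-/

open Matrix TopologicalSpace Topology Filter
open scoped Pointwise

section ZariskiTopology

open MvPolynomial

variable {T σ k : Type*} [Field k]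

/-- The topology on `T` whose closed sets are the common zero sets of polynomials in the coordinate
functions `x`, pulled back from the prime spectrum of the polynomial ring so as to inherit
Noetherianity. -/
noncomputable abbrev zariskiTopology (x : T → σ → k) : TopologicalSpace T :=
  .induced (fun t => (pointToPoint (x t) : PrimeSpectrum (MvPolynomial σ k))) inferInstance

theorem noetherianSpace_zariskiTopology [Finite σ] (x : T → σ → k) :
    @NoetherianSpace T (zariskiTopology x) :=
  let _ := zariskiTopology x
  IsInducing.noetherianSpace (IsInducing.mk rfl)

theorem isClosed_zariskiTopology (x : T → σ → k) (P : MvPolynomial σ k) :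
    IsClosed[zariskiTopology x] {t | eval (x t) P = 0} := by
  refine isClosed_induced_iff.2 ⟨_, PrimeSpectrum.isClosed_zeroLocus {P}, ?_⟩
  ext t
  rw [Set.mem_preimage, PrimeSpectrum.mem_zeroLocus, Set.singleton_subset_iff]
  exact mem_vanishingIdeal_singleton_iff (x t) P

theorem continuous_zariskiTopology (x : T → σ → k) (f : T → T) (P : σ → MvPolynomial σ k)
    (hP : ∀ t i, x (f t) i = eval (x t) (P i)) :
    @Continuous T T (zariskiTopology x) (zariskiTopology x) f := by
  let _ := zariskiTopology x
  have hpoint : ∀ t, (pointToPoint (x (f t)) : PrimeSpectrum (MvPolynomial σ k)) =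
      PrimeSpectrum.comap (bind₁ P).toRingHom (pointToPoint (x t)) := by
    intro t
    ext Q
    have hx : x (f t) = fun i => aeval (x t) (P i) := funext (hP t)
    simp [pointToPoint, aeval_bind₁, hx]
  refine continuous_induced_rng.2 ?_
  simp only [Function.comp_def, hpoint]
  exact (PrimeSpectrum.continuous_comap _).comp continuous_induced_dom

end ZariskiTopology

section IrreducibleComponents

variable {T : Type*} [TopologicalSpace T] {X : Set T}

/-- The filter of properties which hold at a general point of an irreducible set `X`, that is, at
every point of `X` outside a closed set which does not contain `X`. -/
def genericFilter (hX : IsIrreducible X) : Filter T where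
  sets := {S | ∃ Z, IsClosed Z ∧ ¬ X ⊆ Z ∧ X \ Z ⊆ S}
  univ_sets := ⟨∅, isClosed_empty, by simpa [Set.subset_empty_iff] using hX.nonempty.ne_empty,
    Set.subset_univ _⟩
  sets_of_superset := fun ⟨Z, hZ, hXZ, hS⟩ hST => ⟨Z, hZ, hXZ, hS.trans hST⟩
  inter_sets := fun ⟨Z, hZ, hXZ, hS⟩ ⟨Z', hZ', hXZ', hS'⟩ =>
    ⟨Z ∪ Z', hZ.union hZ', fun h =>
      (isPreirreducible_iff_isClosed_union_isClosed.1 hX.isPreirreducible Z Z' hZ hZ' h).elim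
        hXZ hXZ', fun _ ht =>
      ⟨hS ⟨ht.1, fun h => ht.2 (.inl h)⟩, hS' ⟨ht.1, fun h => ht.2 (.inr h)⟩⟩⟩

instance genericFilter_neBot (hX : IsIrreducible X) : (genericFilter hX).NeBot :=
  ⟨fun h => by
    obtain ⟨Z, -, hXZ, hempty⟩ : ∅ ∈ genericFilter hX := h ▸ mem_bot
    exact hXZ (Set.sdiff_eq_empty.1 (Set.subset_empty_iff.1 hempty))⟩

theorem eventually_genericFilter_notMem (hX : IsIrreducible X) {Z : Set T} (hZ : IsClosed Z)
    (hXZ : ¬ X ⊆ Z) : ∀ᶠ t in genericFilter hX, t ∉ Z :=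
  ⟨Z, hZ, hXZ, fun _ ht => ht.2⟩

theorem image_homeomorph_mem_irreducibleComponents (e : T ≃ₜ T)
    (hX : X ∈ irreducibleComponents T) : e '' X ∈ irreducibleComponents T :=
  image_mem_irreducibleComponents_of_isPreirreducible_fiber e e.continuous e.isOpenMap
    (fun _ => (Set.subsingleton_singleton.preimage e.injective).isPreirreducible) e.surjective hX

theorem finiteIndex_stabilizer_of_mem_irreducibleComponents {G : Type*} [Group G]
    [NoetherianSpace T] [MulAction G T] [ContinuousConstSMul G T]
    (hX : X ∈ irreducibleComponents T) : (MulAction.stabilizer G X).FiniteIndex := by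
  have horbit : MulAction.orbit G X ⊆ irreducibleComponents T := by
    rintro _ ⟨g, rfl⟩
    exact image_homeomorph_mem_irreducibleComponents (Homeomorph.smul g) hX
  refine ⟨?_⟩
  rw [MulAction.index_stabilizer]
  exact ((Set.ncard_pos (NoetherianSpace.finite_irreducibleComponents.subset horbit)).2
    (MulAction.nonempty_orbit X)).ne'

end IrreducibleComponents

section GeneralPosition

variable {G n k : Type*} [Group G] [Fintype n] [DecidableEq n] [Field k] {ρ : G →* Matrix n n k}

theorem mulVec_map_ne_zero (ρ : G →* Matrix n n k) (g : G) {v : n → k} (hv : v ≠ 0) :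
    ρ g *ᵥ v ≠ 0 := fun h =>
  hv (mulVec_injective_of_isUnit ((Group.isUnit g).map ρ) (h.trans (mulVec_zero _).symm))

theorem vecMul_map_ne_zero (ρ : G →* Matrix n n k) (g : G) {φ : n → k} (hφ : φ ≠ 0) :
    φ ᵥ* ρ g ≠ 0 := fun h =>
  hφ (vecMul_injective_of_isUnit ((Group.isUnit g).map ρ) (h.trans (zero_vecMul _).symm))

/-- The entries of `ρ g` and of `ρ g⁻¹`. The inverse is included so that inversion, and not only
translation, is polynomial in these coordinates. -/
def entriesWithInv (ρ : G →* Matrix n n k) (g : G) : n × n ⊕ n × n → k :=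
  Sum.elim (fun p => ρ g p.1 p.2) fun p => ρ g⁻¹ p.1 p.2

theorem continuous_mul_left_zariskiTopology (ρ : G →* Matrix n n k) (h : G) :
    @Continuous G G (zariskiTopology (entriesWithInv ρ)) (zariskiTopology (entriesWithInv ρ))
      (h * ·) := by
  refine continuous_zariskiTopology _ _
    (Sum.elim (fun p => ∑ l, .C (ρ h p.1 l) * .X (.inl (l, p.2)))
      fun p => ∑ l, .X (.inr (p.1, l)) * .C (ρ h⁻¹ l p.2)) ?_
  rintro g (p | p) <;> simp [entriesWithInv, mul_apply]

theorem continuous_inv_zariskiTopology (ρ : G →* Matrix n n k) :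
    @Continuous G G (zariskiTopology (entriesWithInv ρ)) (zariskiTopology (entriesWithInv ρ))
      (·⁻¹) := by
  refine continuous_zariskiTopology _ _ (fun i => .X i.swap) ?_
  rintro g (p | p) <;> simp [entriesWithInv]

theorem isClosed_zariskiTopology_dotProduct_eq_zero (ρ : G →* Matrix n n k) (φ v : n → k) :
    IsClosed[zariskiTopology (entriesWithInv ρ)] {g | φ ⬝ᵥ ρ g *ᵥ v = 0} := by
  convert isClosed_zariskiTopology (entriesWithInv ρ)
    (∑ i, .C (φ i) * ∑ j, .X (.inl (i, j)) * .C (v j)) using 3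
  simp [entriesWithInv, dotProduct, mulVec]

/-- A linear representation is strongly irreducible if the only subspaces invariant under a
subgroup of finite index are the trivial ones. -/
def IsStronglyIrreducible (ρ : G →* Matrix n n k) : Prop :=
  ∀ H : Subgroup G, H.FiniteIndex → ∀ V : Submodule k (n → k),
    (∀ h ∈ H, ∀ v ∈ V, ρ h *ᵥ v ∈ V) → V = ⊥ ∨ V = ⊤

namespace IsStronglyIrreducible

theorem exists_mem_dotProduct_ne_zero [TopologicalSpace G] [NoetherianSpace G]
    [ContinuousConstSMul G G] (hρ : IsStronglyIrreducible ρ) {X : Set G}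
    (hX : X ∈ irreducibleComponents G) {φ v : n → k} (hφ : φ ≠ 0) (hv : v ≠ 0) :
    ∃ g ∈ X, φ ⬝ᵥ ρ g⁻¹ *ᵥ v ≠ 0 := by
  by_contra! hzero
  let W : Submodule k (n → k) :=
    ⨅ g ∈ X, LinearMap.ker (dotProductBilin k k (φ ᵥ* ρ g⁻¹))
  have hW : ∀ w, w ∈ W ↔ ∀ g ∈ X, φ ⬝ᵥ ρ g⁻¹ *ᵥ w = 0 := by
    simp [W, dotProduct_mulVec]
  have hinv : ∀ h ∈ MulAction.stabilizer G X, ∀ w ∈ W, ρ h *ᵥ w ∈ W := by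
    intro h hh w hw
    rw [hW] at hw ⊢
    intro g hg
    have hmem : h⁻¹ * g ∈ X := by
      rw [← MulAction.mem_stabilizer_iff.1 (inv_mem hh)]
      exact Set.smul_mem_smul_set hg
    simpa using hw _ hmem
  obtain ⟨g, hg⟩ := hX.1.nonempty
  rcases hρ _ (finiteIndex_stabilizer_of_mem_irreducibleComponents hX) W hinv with hbot | htop
  · exact hv ((Submodule.mem_bot k).1 (hbot ▸ (hW v).2 hzero))
  · refine vecMul_map_ne_zero ρ g⁻¹ hφ (dotProduct_eq_zero _ fun w => ?_)
    rw [← dotProduct_mulVec]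
    exact (hW w).1 (htop ▸ Submodule.mem_top) g hg

/-- Finitely many conditions which hold along the filter hold simultaneously for some `g`. -/
theorem exists_filter_eventually_dotProduct_ne_zero (hρ : IsStronglyIrreducible ρ) :
    ∃ l : Filter G, l.NeBot ∧ ∀ φ ≠ 0, ∀ v ≠ 0,
      (∀ᶠ g in l, φ ⬝ᵥ ρ g *ᵥ v ≠ 0) ∧ ∀ᶠ g in l, φ ⬝ᵥ ρ g⁻¹ *ᵥ v ≠ 0 := by
  let _ := zariskiTopology (entriesWithInv ρ)
  have _ := noetherianSpace_zariskiTopology (entriesWithInv ρ)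
  have _ : ContinuousConstSMul G G := ⟨continuous_mul_left_zariskiTopology ρ⟩
  have _ : ContinuousInv G := ⟨continuous_inv_zariskiTopology ρ⟩
  have hclosed (φ v : n → k) : IsClosed {g | φ ⬝ᵥ ρ g *ᵥ v = 0} :=
    isClosed_zariskiTopology_dotProduct_eq_zero ρ φ v
  obtain ⟨X, hX⟩ : ∃ X, X ∈ irreducibleComponents G :=
    ⟨_, irreducibleComponent_mem_irreducibleComponents 1⟩
  refine ⟨genericFilter hX.1, inferInstance, fun φ hφ v hv => ⟨?_, ?_⟩⟩
  · refine eventually_genericFilter_notMem hX.1 (hclosed φ v) fun hsub => ?_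
    obtain ⟨_, ⟨g, hg, rfl⟩, hne⟩ := hρ.exists_mem_dotProduct_ne_zero
      (image_homeomorph_mem_irreducibleComponents (Homeomorph.inv G) hX) hφ hv
    rw [Homeomorph.coe_inv, inv_inv] at hne
    exact hne (hsub hg)
  · refine eventually_genericFilter_notMem hX.1 ((hclosed φ v).preimage continuous_inv)
      fun hsub => ?_
    obtain ⟨g, hg, hne⟩ := hρ.exists_mem_dotProduct_ne_zero hX hφ hv
    exact hne (hsub hg)

theorem exists_seq_dotProduct_ne_zero {κ : Type*} [Finite κ] (hρ : IsStronglyIrreducible ρ)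
    {v x₀ ξ : n → k} {ψ : κ → n → k} (hv : v ≠ 0) (hx₀ : x₀ ≠ 0) (hξ : ξ ≠ 0)
    (hψ : ∀ b, ψ b ≠ 0) :
    ∃ z : ℕ → G, (∀ m, ξ ⬝ᵥ ρ (z m) *ᵥ v ≠ 0) ∧ (∀ m b, ψ b ⬝ᵥ ρ (z m)⁻¹ *ᵥ x₀ ≠ 0) ∧
      ∀ m m', m ≠ m' → ∀ b, ψ b ⬝ᵥ ρ ((z m)⁻¹ * z m') *ᵥ v ≠ 0 := by
  obtain ⟨l, _, hl⟩ := hρ.exists_filter_eventually_dotProduct_ne_zero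
  let r : G → G → Prop := fun y z =>
    (∀ b, ψ b ⬝ᵥ ρ (y⁻¹ * z) *ᵥ v ≠ 0) ∧ ∀ b, ψ b ⬝ᵥ ρ (z⁻¹ * y) *ᵥ v ≠ 0
  have _ : Std.Symm r := ⟨fun _ _ => And.symm⟩
  have hr (y : G) : ∀ᶠ z in l, r y z := by
    simp only [r, eventually_and, eventually_all]
    refine ⟨fun b => ?_, fun b => ?_⟩
    · simpa [dotProduct_mulVec] using (hl _ (vecMul_map_ne_zero ρ y⁻¹ (hψ b)) v hv).1
    · simpa using (hl _ (hψ b) _ (mulVec_map_ne_zero ρ y hv)).2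
  obtain ⟨z, hz, hzr⟩ := exists_seq_of_forall_finset_exists'
    (fun z : G => ξ ⬝ᵥ ρ z *ᵥ v ≠ 0 ∧ ∀ b, ψ b ⬝ᵥ ρ z⁻¹ *ᵥ x₀ ≠ 0) r fun s _ =>
      (((hl ξ hξ v hv).1.and (eventually_all.2 fun b => (hl _ (hψ b) x₀ hx₀).2)).and
        ((eventually_all_finset s).2 fun y _ => hr y)).exists
  exact ⟨z, fun m => (hz m).1, fun m => (hz m).2, fun m m' hm => (hzr hm).1⟩

end IsStronglyIrreducible

end GeneralPosition

section PingPong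

variable {G ι : Type*} [Group G]

/-- `FreeGroup.injective_lift_of_ping_pong` needs disjoint repelling sets, but neighbourhoods of
hyperplanes always meet; here a letter only has to be controlled on the sets `N d`. -/
theorem injective_lift_of_leftMul_ping_pong (a : ι → G) (N : ι × Bool → Set G)
    (hone : ∀ c, 1 ∉ N c)
    (hletter : ∀ c : ι × Bool, cond c.2 (a c.1) (a c.1)⁻¹ ∈ N c)
    (hmul : ∀ c d : ι × Bool, (c.1 = d.1 → c.2 = d.2) → ∀ x ∈ N d,
      cond c.2 (a c.1) (a c.1)⁻¹ * x ∈ N c) :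
    Function.Injective (FreeGroup.lift a) := by
  have hword : ∀ (L : List (ι × Bool)) (c : ι × Bool), FreeGroup.IsReduced (c :: L) →
      FreeGroup.lift a (FreeGroup.mk (c :: L)) ∈ N c := by
    intro L
    induction L with
    | nil => simpa [FreeGroup.lift_mk] using hletter
    | cons d L ih =>
      intro c hc
      obtain ⟨hcd, hL⟩ := FreeGroup.isReduced_cons_cons.1 hc
      simpa [FreeGroup.lift_mk] using hmul c d hcd _ (ih d hL)
  classical
  refine (injective_iff_map_eq_one _).2 fun w hw => ?_
  rcases hL : w.toWord with _ | ⟨c, L⟩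
  · exact FreeGroup.toWord_eq_nil_iff.1 hL
  · have hc := hword L c (hL ▸ FreeGroup.isReduced_toWord)
    rw [← hL, FreeGroup.mk_toWord, hw] at hc
    exact absurd hc (hone c)

end PingPong

theorem eventually_forall_exists_smul_mulVec_mem {n 𝕜 : Type*} [Fintype n] [Field 𝕜]
    [TopologicalSpace 𝕜] [IsTopologicalRing 𝕜] [ContinuousInv₀ 𝕜] {p f : n → 𝕜} {K U : Set (n → 𝕜)}
    (hK : IsCompact K) (hf : ∀ y ∈ K, f ⬝ᵥ y ≠ 0) (hU : U ∈ 𝓝 p) :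
    ∀ᶠ M in 𝓝 (vecMulVec p f), ∀ y ∈ K, ∃ c : 𝕜, c • (M *ᵥ y) ∈ U := by
  refine hK.eventually_forall_of_forall_eventually fun y hy => ?_
  have hcont : ContinuousAt (fun z : Matrix n n 𝕜 × (n → 𝕜) =>
      (f ⬝ᵥ z.2)⁻¹ • (z.1 *ᵥ z.2)) (vecMulVec p f, y) :=
    ((continuous_const.dotProduct continuous_snd).continuousAt.inv₀ (hf y hy)).smul
      (continuous_fst.matrix_mulVec continuous_snd).continuousAt
  have hval : (f ⬝ᵥ y)⁻¹ • (vecMulVec p f *ᵥ y) = p := by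
    simp [vecMulVec_mulVec, smul_smul, hf y hy]
  filter_upwards [hcont.eventually_mem (hval.symm ▸ hU)] with z hz using ⟨_, hz⟩

section LimitPairs

variable {G n 𝕜 : Type*} [Group G] [Fintype n] [DecidableEq n] [Field 𝕜] [TopologicalSpace 𝕜]

/-- The pairs of pseudo-projective limits of `ρ g` and of `ρ g⁻¹`, taken along the same `g`. The two
scalars are independent and may vanish, so either limit may be zero. -/
def limitPairs (ρ : G →* Matrix n n 𝕜) : Set (Matrix n n 𝕜 × Matrix n n 𝕜) :=
  closure {P | ∃ (g : G) (s t : 𝕜), P = (s • ρ g, t • ρ g⁻¹)}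

theorem mapsTo_swap_limitPairs (ρ : G →* Matrix n n 𝕜) :
    Set.MapsTo Prod.swap (limitPairs ρ) (limitPairs ρ) := by
  refine Set.MapsTo.closure ?_ continuous_swap
  rintro _ ⟨g, s, t, rfl⟩
  exact ⟨g⁻¹, t, s, by simp⟩

variable [IsTopologicalRing 𝕜]

theorem mapsTo_conj_limitPairs (ρ : G →* Matrix n n 𝕜) (k : G) :
    Set.MapsTo (fun P => (P.1 * ρ k * P.2, P.1 * ρ k⁻¹ * P.2)) (limitPairs ρ)
      (limitPairs ρ) := by
  refine Set.MapsTo.closure ?_ (by fun_prop)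
  rintro _ ⟨g, s, t, rfl⟩
  exact ⟨g * k * g⁻¹, s * t, s * t, by simp [smul_smul, mul_assoc, mul_comm]⟩

theorem mapsTo_mul_limitPairs (ρ : G →* Matrix n n 𝕜) (k l : G) :
    Set.MapsTo (fun P => (ρ k * P.1 * ρ l⁻¹, ρ l * P.2 * ρ k⁻¹)) (limitPairs ρ)
      (limitPairs ρ) := by
  refine Set.MapsTo.closure ?_ (by fun_prop)
  rintro _ ⟨g, s, t, rfl⟩
  exact ⟨k * g * l⁻¹, s, t, by simp [mul_assoc]⟩

variable [ContinuousInv₀ 𝕜] {ρ : G →* Matrix n n 𝕜}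

theorem exists_forall_exists_smul_mulVec_mem_of_mem_limitPairs {p f : Bool → n → 𝕜}
    {K U : Bool → Set (n → 𝕜)}
    (h : (vecMulVec (p true) (f true), vecMulVec (p false) (f false)) ∈ limitPairs ρ)
    (hK : ∀ b, IsCompact (K b)) (hf : ∀ b, ∀ y ∈ K b, f b ⬝ᵥ y ≠ 0) (hU : ∀ b, U b ∈ 𝓝 (p b)) :
    ∃ g : G, ∀ b, ∀ y ∈ K b, ∃ c : 𝕜, c • (ρ (cond b g g⁻¹) *ᵥ y) ∈ U b := by
  have hcontract (b : Bool) :=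
    eventually_forall_exists_smul_mulVec_mem (hK b) (hf b) (hU b)
  obtain ⟨_, ⟨htrue, hfalse⟩, g, s, t, rfl⟩ :=
    mem_closure_iff_nhds.1 h _ ((hcontract true).prod_nhds (hcontract false))
  refine ⟨g, Bool.forall_bool.2 ⟨fun y hy => ?_, fun y hy => ?_⟩⟩
  · obtain ⟨c, hc⟩ := hfalse y hy
    exact ⟨c * t, by simpa [smul_mulVec, smul_smul] using hc⟩
  · obtain ⟨c, hc⟩ := htrue y hy
    exact ⟨c * s, by simpa [smul_mulVec, smul_smul] using hc⟩

theorem exists_injective_lift_of_mem_limitPairs {ι : Type*} [Finite ι] [T1Space 𝕜]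
    [LocallyCompactSpace 𝕜] {p f : ι × Bool → n → 𝕜} {x₀ ξ : n → 𝕜}
    (hlim : ∀ i, (vecMulVec (p (i, true)) (f (i, true)),
      vecMulVec (p (i, false)) (f (i, false))) ∈ limitPairs ρ)
    (hfp : ∀ c d : ι × Bool, (c.1 = d.1 → c.2 = d.2) → f c ⬝ᵥ p d ≠ 0)
    (hfx : ∀ c, f c ⬝ᵥ x₀ ≠ 0) (hξp : ∀ c, ξ ⬝ᵥ p c ≠ 0) (hξx : ξ ⬝ᵥ x₀ = 0) :
    ∃ a : ι → G, Function.Injective (FreeGroup.lift a) := by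
  have hnhds (φ q : n → 𝕜) (h : φ ⬝ᵥ q ≠ 0) : ∀ᶠ y in 𝓝 q, φ ⬝ᵥ y ≠ 0 :=
    (continuous_const.dotProduct continuous_id).continuousAt.eventually_ne h
  have hball (d : ι × Bool) : ∃ U ∈ 𝓝 (p d), IsCompact U ∧ ∀ y ∈ U, ξ ⬝ᵥ y ≠ 0 ∧
      ∀ c : ι × Bool, (c.1 = d.1 → c.2 = d.2) → f c ⬝ᵥ y ≠ 0 := by
    have hev : ∀ᶠ y in 𝓝 (p d), ξ ⬝ᵥ y ≠ 0 ∧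
        ∀ c : ι × Bool, (c.1 = d.1 → c.2 = d.2) → f c ⬝ᵥ y ≠ 0 := by
      simp only [eventually_and, eventually_all]
      exact ⟨hnhds _ _ (hξp d), fun c hcd => hnhds _ _ (hfp c d hcd)⟩
    obtain ⟨U, hU, hsub, hcomp⟩ := local_compact_nhds hev
    exact ⟨U, hU, hcomp, hsub⟩
  choose U hU hUcomp hUne using hball
  let K (c : ι × Bool) : Set (n → 𝕜) :=
    insert x₀ (⋃ d ∈ {d : ι × Bool | c.1 = d.1 → c.2 = d.2}, U d)
  have hK (c) : IsCompact (K c) :=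
    ((Set.toFinite _).isCompact_biUnion fun d _ => hUcomp d).insert x₀
  have hfK (c) : ∀ y ∈ K c, f c ⬝ᵥ y ≠ 0 := by
    rintro y (rfl | hy)
    · exact hfx c
    · obtain ⟨d, hd, hy⟩ := Set.mem_iUnion₂.1 hy
      exact (hUne d y hy).2 c hd
  choose a ha using fun i => exists_forall_exists_smul_mulVec_mem_of_mem_limitPairs
    (K := fun b => K (i, b)) (hlim i) (fun b => hK (i, b)) (fun b => hfK (i, b))
    fun b => hU (i, b)
  refine ⟨a, injective_lift_of_leftMul_ping_pong a
    (fun c => {g | ∃ l : 𝕜, l • (ρ g *ᵥ x₀) ∈ U c}) ?_ ?_ ?_⟩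
  · rintro c ⟨l, hl⟩
    exact (hUne c _ hl).1 (by simp [hξx])
  · exact fun c => ha c.1 c.2 x₀ (Set.mem_insert _ _)
  · rintro c d hcd x ⟨l, hl⟩
    obtain ⟨m, hm⟩ := ha c.1 c.2 _ (Set.mem_insert_of_mem _ (Set.mem_biUnion hcd hl))
    exact ⟨m * l, by simpa [mulVec_smul, smul_smul] using hm⟩

end LimitPairs

section GenericPingPong

variable {G n 𝕜 : Type*} [Group G] [Fintype n] [DecidableEq n] [Field 𝕜] [TopologicalSpace 𝕜]
  [IsTopologicalRing 𝕜] {ρ : G →* Matrix n n 𝕜}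

namespace IsStronglyIrreducible

theorem exists_mem_limitPairs_common_image (hρ : IsStronglyIrreducible ρ) {v φ : n → 𝕜}
    {B : Matrix n n 𝕜} (hlim : (vecMulVec v φ, B) ∈ limitPairs ρ) (hφ : φ ≠ 0) (hB : B ≠ 0) :
    ∃ ψ : Bool → n → 𝕜, (∀ b, ψ b ≠ 0) ∧
      (vecMulVec v (ψ true), vecMulVec v (ψ false)) ∈ limitPairs ρ := by
  obtain ⟨w, hw⟩ : ∃ w, B *ᵥ w ≠ 0 := by
    by_contra! h
    exact hB (ext_of_mulVec_single fun j => (h _).trans (zero_mulVec _).symm)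
  obtain ⟨l, _, hl⟩ := hρ.exists_filter_eventually_dotProduct_ne_zero
  obtain ⟨k, hk, hk_inv⟩ := ((hl φ hφ _ hw).1.and (hl φ hφ _ hw).2).exists
  refine ⟨fun b => φ ᵥ* (ρ (cond b k k⁻¹) * B), Bool.forall_bool.2 ⟨?_, ?_⟩, ?_⟩
  · intro h
    apply hk_inv
    simpa [dotProduct_mulVec] using congrArg (· ⬝ᵥ w) h
  · intro h
    apply hk
    simpa [dotProduct_mulVec] using congrArg (· ⬝ᵥ w) h
  · simpa [Matrix.mul_assoc, vecMulVec_mul] using mapsTo_conj_limitPairs ρ k hlim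

theorem exists_injective_lift_of_vecMulVec_mem_limitPairs [T1Space 𝕜] [LocallyCompactSpace 𝕜]
    [ContinuousInv₀ 𝕜] [Nontrivial n] {ι : Type*} [Finite ι] (hρ : IsStronglyIrreducible ρ)
    {v φ : n → 𝕜} {B : Matrix n n 𝕜} (hlim : (vecMulVec v φ, B) ∈ limitPairs ρ) (hv : v ≠ 0)
    (hφ : φ ≠ 0) (hB : B ≠ 0) : ∃ a : ι → G, Function.Injective (FreeGroup.lift a) := by
  obtain ⟨ψ, hψ, hlim⟩ := hρ.exists_mem_limitPairs_common_image hlim hφ hB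
  obtain ⟨i, j, hij⟩ := exists_pair_ne n
  obtain ⟨z, hξ, hx₀, hz⟩ := hρ.exists_seq_dotProduct_ne_zero (x₀ := Pi.single i 1)
    (ξ := Pi.single j 1) hv (by simp) (by simp) hψ
  obtain ⟨e, he⟩ := exists_injective_nat (ι × Bool)
  refine exists_injective_lift_of_mem_limitPairs (ρ := ρ) (p := fun c => ρ (z (e c)) *ᵥ v)
    (f := fun c => ψ c.2 ᵥ* ρ (z (e (c.1, !c.2)))⁻¹) (x₀ := Pi.single i 1)
    (ξ := Pi.single j 1) (fun m => ?_) (fun c d hcd => ?_) (fun c => ?_) (fun c => hξ _) ?_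
  · simpa [mul_vecMulVec, vecMulVec_mul] using
      mapsTo_mul_limitPairs ρ (z (e (m, true))) (z (e (m, false))) hlim
  · have hne : (c.1, !c.2) ≠ d := by
      rintro rfl
      simp at hcd
    simpa [dotProduct_mulVec] using hz _ _ (he.ne hne) c.2
  · simpa only [dotProduct_mulVec] using hx₀ _ c.2
  · simp [hij]

end IsStronglyIrreducible

end GenericPingPong

section Rescaling

variable {α 𝕜 E : Type*} [NontriviallyNormedField 𝕜] [NormedAddCommGroup E] [NormedSpace 𝕜 E]

theorem exists_tendsto_smul_ne_zero [ProperSpace E] (l : Ultrafilter α) {x : α → E}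
    (hx : ∀ a, x a ≠ 0) :
    ∃ (s : α → 𝕜) (y : E), y ≠ 0 ∧ Tendsto (fun a => s a • x a) l (𝓝 y) := by
  obtain ⟨c, hc⟩ := NormedField.exists_one_lt_norm 𝕜
  choose s _ hlt hle _ using fun a => rescale_to_shell hc one_pos (hx a)
  have hcompact : IsCompact (Metric.closedBall (0 : E) 1 \ Metric.ball 0 (1 / ‖c‖)) :=
    (isCompact_closedBall 0 1).diff Metric.isOpen_ball
  obtain ⟨y, hy, hlim⟩ := hcompact.ultrafilter_le_nhds' (l.map fun a => s a • x a)
    (mem_map.2 <| Eventually.of_forall fun a =>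
      ⟨by simpa using (hlt a).le, by simpa using hle a⟩)
  refine ⟨s, y, ?_, hlim⟩
  rintro rfl
  exact hy.2 (Metric.mem_ball_self (by positivity))

theorem tendsto_zero_of_tendsto_smul_of_tendsto_cobounded {l : Filter α} {s : α → 𝕜} {x : α → E}
    {y : E} (hsx : Tendsto (fun a => s a • x a) l (𝓝 y))
    (hx : Tendsto x l (Bornology.cobounded E)) : Tendsto s l (𝓝 0) := by
  have hnorm : Tendsto (fun a => ‖x a‖) l atTop := tendsto_norm_cobounded_atTop.comp hx
  have hlim := hsx.norm.mul hnorm.inv_tendsto_atTop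
  rw [mul_zero] at hlim
  refine tendsto_zero_iff_norm_tendsto_zero.2 (hlim.congr' ?_)
  filter_upwards [hnorm.eventually_gt_atTop 0] with a ha
  simp [norm_smul, ha.ne']

theorem exists_ultrafilter_tendsto_cobounded {x : α → E}
    (hx : ¬ Bornology.IsBounded (Set.range x)) :
    ∃ l : Ultrafilter α, Tendsto x l (Bornology.cobounded E) := by
  have hne : (comap x (Bornology.cobounded E)).NeBot := by
    rwa [comap_neBot_iff_compl_range, ← Bornology.isBounded_def]
  exact ⟨@Ultrafilter.of _ _ hne, (tendsto_iff_comap.2 (@Ultrafilter.of_le _ _ hne))⟩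

end Rescaling

theorem exists_eq_vecMulVec_of_rank_le_one {m n K : Type*} [Fintype n] [Field K]
    {A : Matrix m n K} (hA : A.rank ≤ 1) : ∃ v φ, A = vecMulVec v φ := by
  classical
  obtain ⟨v, hv⟩ := finrank_le_one_iff.1 hA
  choose φ hφ using fun j => hv ⟨A *ᵥ Pi.single j 1, LinearMap.mem_range_self A.mulVecLin _⟩
  refine ⟨v, φ, ?_⟩
  ext i j
  have hij := congrFun (congrArg Subtype.val (hφ j)) i
  simpa [vecMulVec_apply, mul_comm] using hij.symm

section RankOneLimits

open scoped Matrix.Norms.Elementwise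

variable {G n 𝕜 : Type*} [Group G] [Fintype n] [DecidableEq n] [NontriviallyNormedField 𝕜]
  [ProperSpace 𝕜] {ρ : G →* Matrix n n 𝕜}

theorem exists_mem_limitPairs_mul_eq_zero [Nonempty n] (hdet : ∀ g, (ρ g).det = 1)
    (hρ : ¬ Bornology.IsBounded (Set.range ρ)) :
    ∃ A B, (A, B) ∈ limitPairs ρ ∧ A ≠ 0 ∧ B ≠ 0 ∧ A * B = 0 := by
  have _ : ProperSpace (Matrix n n 𝕜) := FiniteDimensional.proper 𝕜 _
  obtain ⟨l, hl⟩ := exists_ultrafilter_tendsto_cobounded hρ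
  have hne (g : G) : ρ g ≠ 0 := ((Group.isUnit g).map ρ).ne_zero
  obtain ⟨s, A, hA, hsA⟩ := exists_tendsto_smul_ne_zero (𝕜 := 𝕜) l hne
  obtain ⟨t, B, hB, htB⟩ := exists_tendsto_smul_ne_zero (𝕜 := 𝕜) l fun g => hne g⁻¹
  refine ⟨A, B, mem_closure_of_tendsto (hsA.prodMk_nhds htB)
    (Eventually.of_forall fun g => ⟨g, s g, t g, rfl⟩), hA, hB, ?_⟩
  have hs : Tendsto s l (𝓝 0) := tendsto_zero_of_tendsto_smul_of_tendsto_cobounded hsA hl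
  have hdetA : A.det = 0 := by
    have hlim := ((continuous_id.matrix_det).tendsto A).comp hsA
    have hpow : Tendsto (fun g => (s g • ρ g).det) l (𝓝 0) := by
      simpa [hdet, det_smul] using hs.pow (Fintype.card n)
    exact tendsto_nhds_unique hlim hpow
  have hscalar : A * B ∈ 𝕜 ∙ (1 : Matrix n n 𝕜) :=
    (Submodule.closed_of_finiteDimensional (𝕜 ∙ (1 : Matrix n n 𝕜))).mem_of_tendsto
      (((continuous_fst.matrix_mul continuous_snd).tendsto (A, B)).comp (hsA.prodMk_nhds htB))
      (Eventually.of_forall fun g =>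
        Submodule.mem_span_singleton.2 ⟨s g * t g, by simp [smul_smul, ← map_mul, mul_comm]⟩)
  obtain ⟨c, hc⟩ := Submodule.mem_span_singleton.1 hscalar
  have hc0 : c = 0 := by
    have := congrArg det hc
    simpa [det_smul, hdetA] using this
  rw [← hc, hc0, zero_smul]

theorem exists_vecMulVec_mem_limitPairs [Nonempty n] (hn : Fintype.card n ≤ 3)
    (hdet : ∀ g, (ρ g).det = 1) (hρ : ¬ Bornology.IsBounded (Set.range ρ)) :
    ∃ v φ B, v ≠ 0 ∧ φ ≠ 0 ∧ B ≠ 0 ∧ (vecMulVec v φ, B) ∈ limitPairs ρ := by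
  have hrank : ∃ A B, A.rank ≤ 1 ∧ A ≠ 0 ∧ B ≠ 0 ∧ (A, B) ∈ limitPairs ρ := by
    obtain ⟨A, B, hlim, hA, hB, hAB⟩ := exists_mem_limitPairs_mul_eq_zero hdet hρ
    have hsum := rank_add_rank_le_card_of_mul_eq_zero hAB
    rcases le_or_gt A.rank 1 with hA1 | hA1
    · exact ⟨A, B, hA1, hA, hB, hlim⟩
    · exact ⟨B, A, by lia, hB, hA, mapsTo_swap_limitPairs ρ hlim⟩
  obtain ⟨A, B, hA1, hA, hB, hlim⟩ := hrank
  obtain ⟨v, φ, rfl⟩ := exists_eq_vecMulVec_of_rank_le_one hA1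
  obtain ⟨hv, hφ⟩ := not_or.1 (mt vecMulVec_eq_zero.2 hA)
  exact ⟨v, φ, B, hv, hφ, hB, hlim⟩

end RankOneLimits

section DiscreteSubgroups

variable {n 𝕜 : Type*} [Fintype n] [DecidableEq n]

theorem IsStronglyIrreducible.infinite {G : Type*} [Group G] [Field 𝕜] [Nontrivial n]
    {ρ : G →* Matrix n n 𝕜} (hρ : IsStronglyIrreducible ρ) : Infinite G := by
  by_contra hfin
  rw [not_infinite_iff_finite] at hfin
  obtain ⟨i, j, hij⟩ := exists_pair_ne n
  rcases hρ ⊥ inferInstance (𝕜 ∙ Pi.single i 1) (by simp +contextual) with hbot | htop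
  · simp at hbot
  · obtain ⟨c, hc⟩ := Submodule.mem_span_singleton.1
      (htop ▸ Submodule.mem_top : (Pi.single j 1 : n → 𝕜) ∈ 𝕜 ∙ Pi.single i 1)
    simpa [hij] using congrFun hc j

open scoped Matrix.Norms.Elementwise in
theorem finite_of_isBounded_of_discrete [NontriviallyNormedField 𝕜] [ProperSpace 𝕜]
    (Γ : Subgroup (SpecialLinearGroup n 𝕜)) [DiscreteTopology Γ]
    (hΓ : Bornology.IsBounded (Set.range (SpecialLinearGroup.coeMonoidHom.comp Γ.subtype))) :
    Finite Γ := by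
  have _ : ProperSpace (Matrix n n 𝕜) := FiniteDimensional.proper 𝕜 _
  have hclosed : IsClosed (Γ : Set (SpecialLinearGroup n 𝕜)) := Subgroup.isClosed_of_discrete
  have hcompact : IsCompact (Γ : Set (SpecialLinearGroup n 𝕜)) :=
    (SpecialLinearGroup.isClosedEmbedding_val.isCompact_preimage
      hΓ.isCompact_closure).of_isClosed_subset hclosed
      fun g hg => subset_closure ⟨⟨g, hg⟩, rfl⟩
  have _ := isCompact_iff_compactSpace.1 hcompact
  exact finite_of_compact_of_discrete

theorem isStronglyIrreducible_of_forall_map_toLin'_ne [Field 𝕜]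
    {Γ : Subgroup (SpecialLinearGroup n 𝕜)}
    (hΓ : ¬ ∃ (H : Subgroup (SpecialLinearGroup n 𝕜)) (V : Submodule 𝕜 (n → 𝕜)),
      H ≤ Γ ∧ (H.subgroupOf Γ).FiniteIndex ∧
      0 < Module.finrank 𝕜 V ∧ Module.finrank 𝕜 V < Fintype.card n ∧
      ∀ h ∈ H, Submodule.map (toLin' (h : Matrix n n 𝕜)) V = V) :
    IsStronglyIrreducible (SpecialLinearGroup.coeMonoidHom.comp Γ.subtype) := by
  intro H hH V hinv
  contrapose! hΓ
  refine ⟨H.map Γ.subtype, V, Γ.map_subtype_le H, ?_,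
    Nat.pos_of_ne_zero (mt Submodule.finrank_eq_zero.1 hΓ.1),
    by simpa using Submodule.finrank_lt hΓ.2, ?_⟩
  · rwa [Subgroup.subgroupOf, Subgroup.comap_map_eq_self_of_injective Γ.subtype_injective]
  · rintro _ ⟨h, hh, rfl⟩
    refine le_antisymm (Submodule.map_le_iff_le_comap.2 (hinv h hh)) fun v hv => ?_
    refine ⟨_, hinv _ (inv_mem hh) v hv, ?_⟩
    simp [mul_adjugate]

open scoped Matrix.Norms.Elementwise in
theorem exists_injective_lift_of_isStronglyIrreducible [NontriviallyNormedField 𝕜]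
    [ProperSpace 𝕜] [Nontrivial n] {ι : Type*} [Finite ι] (hn : Fintype.card n ≤ 3)
    (Γ : Subgroup (SpecialLinearGroup n 𝕜)) [DiscreteTopology Γ]
    (hΓ : IsStronglyIrreducible (SpecialLinearGroup.coeMonoidHom.comp Γ.subtype)) :
    ∃ a : ι → Γ, Function.Injective (FreeGroup.lift a) := by
  have hunbounded : ¬ Bornology.IsBounded
      (Set.range (SpecialLinearGroup.coeMonoidHom.comp Γ.subtype)) := fun hbdd =>
    hΓ.infinite.not_finite (finite_of_isBounded_of_discrete Γ hbdd)
  obtain ⟨v, φ, B, hv, hφ, hB, hlim⟩ :=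
    exists_vecMulVec_mem_limitPairs hn (fun g => g.1.det_coe) hunbounded
  exact hΓ.exists_injective_lift_of_vecMulVec_mem_limitPairs hlim hv hφ hB

end DiscreteSubgroups

theorem stmt_18_general {n 𝕜 : Type*} [Fintype n] [DecidableEq n] [Nontrivial n]
    [NontriviallyNormedField 𝕜] [ProperSpace 𝕜] (hn : Fintype.card n ≤ 3)
    (Γ : Subgroup (SpecialLinearGroup n 𝕜)) (hdisc : DiscreteTopology Γ)
    (hstrirr : ¬ ∃ (H : Subgroup (SpecialLinearGroup n 𝕜)) (V : Submodule 𝕜 (n → 𝕜)),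
      H ≤ Γ ∧ (H.subgroupOf Γ).FiniteIndex ∧
      0 < Module.finrank 𝕜 V ∧ Module.finrank 𝕜 V < Fintype.card n ∧
      ∀ h ∈ H, Submodule.map (toLin' (h : Matrix n n 𝕜)) V = V) :
    ∃ a b : SpecialLinearGroup n 𝕜, a ∈ Γ ∧ b ∈ Γ ∧
      Function.Injective (FreeGroup.lift ![a, b]) := by
  obtain ⟨a, ha⟩ := exists_injective_lift_of_isStronglyIrreducible (ι := Fin 2) hn Γ
    (isStronglyIrreducible_of_forall_map_toLin'_ne hstrirr)
  refine ⟨a 0, a 1, (a 0).2, (a 1).2, ?_⟩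
  have hlift : FreeGroup.lift ![(a 0 : SpecialLinearGroup n 𝕜), a 1] =
      Γ.subtype.comp (FreeGroup.lift a) := by
    ext1 i
    fin_cases i <;> simp
  rw [hlift]
  exact Γ.subtype_injective.comp ha

/-- A strongly irreducible complex Kleinian group `Γ ≤ SL(3, ℂ)` contains a free
subgroup of rank 2. -/
theorem stmt_18 (Γ : Subgroup (Matrix.SpecialLinearGroup (Fin 3) ℂ))
    (hdisc : DiscreteTopology Γ)
    (hstrirr : ¬ ∃ (H : Subgroup (Matrix.SpecialLinearGroup (Fin 3) ℂ))
        (V : Submodule ℂ (Fin 3 → ℂ)),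
        H ≤ Γ ∧ (H.subgroupOf Γ).FiniteIndex ∧
        0 < Module.finrank ℂ V ∧ Module.finrank ℂ V < 3 ∧
        ∀ h ∈ H, Submodule.map (Matrix.toLin' (h : Matrix (Fin 3) (Fin 3) ℂ)) V = V)
    (hKleinian : ∃ U : Set (Projectivization ℂ (Fin 3 → ℂ)),
        U.Nonempty ∧ IsOpen U ∧ (∀ γ ∈ Γ, projAct γ '' U = U) ∧
        ∀ K : Set (Projectivization ℂ (Fin 3 → ℂ)), K ⊆ U → IsCompact K →
          {γ : Matrix.SpecialLinearGroup (Fin 3) ℂ |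
            γ ∈ Γ ∧ (projAct γ '' K ∩ K).Nonempty}.Finite) :
    ∃ a b : Matrix.SpecialLinearGroup (Fin 3) ℂ, a ∈ Γ ∧ b ∈ Γ ∧
      Function.Injective
        (FreeGroup.lift ![a, b] : FreeGroup (Fin 2) →* Matrix.SpecialLinearGroup (Fin 3) ℂ) :=
  stmt_18_general (by simp) Γ hdisc (by simpa only [Fintype.card_fin] using hstrirr)
end

section
/- Let γ₁, γ₂ ∈ SL(2,ℂ) be loxodromic elements (each has two eigenvalues of distinct absolute value) such that no eigenvector of γ₁ is proportional to an eigenvector of γ₂ (their fixed-point sets in the projective line ℙ(ℂ²) are disjoint). Then there exists an integer n > 0 such that the subgroup of SL(2,ℂ) generated by γ₁ⁿ and γ₂ⁿ is discrete and free of rank 2, i.e. it is free on the generating set {γ₁ⁿ, γ₂ⁿ}. -/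
noncomputable instance : TopologicalSpace (Matrix.SpecialLinearGroup (Fin 2) ℂ) :=
  inferInstanceAs (TopologicalSpace {A : Matrix (Fin 2) (Fin 2) ℂ // A.det = 1})

/-!
Play ping-pong with closed cones of `K²`. If `p` and `q` are eigenvectors of `g` for the
eigenvalues `l` and `l⁻¹`, with `1 < ‖l‖`, and `ω` is the determinant form on `K²`, then `g` divides
`ω p` by `l` and multiplies `ω q` by `l`. So a high power of `g` maps everything outside the cone
`‖ω q v‖ ≤ ε * ‖ω p v‖` around the line of `q` into the cone `‖ω p v‖ ≤ ε * ‖ω q v‖` around the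
line of `p`. For small `ε` the cones around distinct fixed lines meet only in `0` and miss some
vector `v`. Every nontrivial reduced word then sends `v` into the finite union of the cones, which
is closed and does not contain `v`, so the nontrivial words stay away from the identity. This gives
freeness and discreteness at once.
-/

open Filter Topology Matrix

namespace Schottky

section PingPong

variable {ι G α : Type*} [Group G]

/-- The formal inverse of a letter of the alphabet `ι × Bool` in which `FreeGroup ι` spells its
words; `(i, true)` is the generator `i` and `(i, false)` its inverse. -/
def invLetter (s : ι × Bool) : ι × Bool := (s.1, !s.2)

/-- The group element that the letter `s` stands for when the generators are interpreted by `a`. -/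
def letter (a : ι → G) (s : ι × Bool) : G := cond s.2 (a s.1) (a s.1)⁻¹

lemma invLetter_invLetter (s : ι × Bool) : invLetter (invLetter s) = s := by
  simp [invLetter]

lemma ne_invLetter (s : ι × Bool) : s ≠ invLetter s := by
  simp [invLetter, Prod.ext_iff]

lemma letter_invLetter (a : ι → G) (s : ι × Bool) : letter a (invLetter s) = (letter a s)⁻¹ := by
  rcases s with ⟨i, _ | _⟩ <;> simp [letter, invLetter]

lemma eq_invLetter_of_ne {s t : ι × Bool} (hfst : s.1 = t.1) (hne : s ≠ t) : t = invLetter s := by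
  rcases s with ⟨i, _ | _⟩ <;> rcases t with ⟨j, _ | _⟩ <;> simp_all [invLetter]

lemma letter_pow (a : ι → G) (n : ℕ) (s : ι × Bool) : letter (a ^ n) s = letter a s ^ n := by
  rcases s with ⟨i, _ | _⟩ <;> simp [letter]

variable [MulAction G α] {a : ι → G} {X : ι × Bool → Set α} {x : α}

lemma prod_letter_smul_mem (hx : ∀ s, letter a s • x ∈ X s)
    (hX : ∀ s t, t ≠ invLetter s → ∀ y ∈ X t, letter a s • y ∈ X s) (w : List (ι × Bool)) :
    ∀ s, FreeGroup.IsReduced (s :: w) → ((s :: w).map (letter a)).prod • x ∈ X s := by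
  induction w with
  | nil => simpa using hx
  | cons t w ih =>
    intro s hred
    obtain ⟨hst, hred⟩ := FreeGroup.isReduced_cons_cons.1 hred
    rw [List.map_cons, List.prod_cons, mul_smul]
    refine hX s t ?_ _ (ih t hred)
    rintro rfl
    simp [invLetter] at hst

lemma lift_smul_mem_iUnion (hx : ∀ s, letter a s • x ∈ X s)
    (hX : ∀ s t, t ≠ invLetter s → ∀ y ∈ X t, letter a s • y ∈ X s)
    {w : FreeGroup ι} (hw : w ≠ 1) : FreeGroup.lift a w • x ∈ ⋃ s, X s := by
  classical
  have hred := FreeGroup.isReduced_toWord (x := w)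
  rw [← FreeGroup.mk_toWord (x := w), FreeGroup.lift_mk]
  rcases hword : w.toWord with _ | ⟨s, u⟩
  · exact absurd (FreeGroup.toWord_eq_nil_iff.1 hword) hw
  · exact Set.mem_iUnion.2 ⟨s, prod_letter_smul_mem hx hX u s (hword ▸ hred)⟩

lemma discreteTopology_range_and_injective {F : Type*} [Group F] [TopologicalSpace G]
    [IsTopologicalGroup G] (f : F →* G) {U : Set G} (hU : U ∈ 𝓝 1) (hf : ∀ w, f w ∈ U → w = 1) :
    DiscreteTopology f.range ∧ Function.Injective f := by
  constructor
  · have hone : {1} ∈ 𝓝 (1 : f.range) := by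
      filter_upwards [continuous_subtype_val.continuousAt hU]
      rintro ⟨_, w, rfl⟩ hw
      simp [hf w hw]
    exact discreteTopology_of_isOpen_singleton_one
      (isOpen_iff_mem_nhds.2 fun _ h => Set.mem_singleton_iff.1 h ▸ hone)
  · exact (injective_iff_map_eq_one f).2 fun w hw => hf w (hw ▸ mem_of_mem_nhds hU)

theorem discreteTopology_closure_and_injective_lift [Finite ι] [TopologicalSpace G]
    [IsTopologicalGroup G] [TopologicalSpace α] (hcont : Continuous fun g : G => g • x)
    (hclosed : ∀ s, IsClosed (X s)) (hxX : ∀ s, x ∉ X s) (hx : ∀ s, letter a s • x ∈ X s)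
    (hX : ∀ s t, t ≠ invLetter s → ∀ y ∈ X t, letter a s • y ∈ X s) :
    DiscreteTopology (Subgroup.closure (Set.range a)) ∧
      Function.Injective (FreeGroup.lift a) := by
  have hU : IsOpen {g : G | g • x ∉ ⋃ s, X s} :=
    (isClosed_iUnion_of_finite hclosed).isOpen_compl.preimage hcont
  rw [← FreeGroup.range_lift_eq_closure]
  refine discreteTopology_range_and_injective _ (hU.mem_nhds (by simpa using hxX)) fun w hw => ?_
  by_contra hne
  exact hw (lift_smul_mem_iUnion hx hX hne)

end PingPong

lemma pow_smul_eq_pow_smul {M R V : Type*} [Monoid M] [Monoid R] [MulAction M V] [MulAction R V]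
    [SMulCommClass M R V] {g : M} {l : R} {v : V} (h : g • v = l • v) (n : ℕ) :
    g ^ n • v = l ^ n • v := by
  induction n with
  | zero => simp
  | succ n ih => rw [pow_succ, mul_smul, h, smul_comm, ih, ← mul_smul, ← pow_succ']

lemma exists_smul_eq_of_letter_smul_eq {ι G K V : Type*} [Group G] [GroupWithZero K]
    [MulAction G V] [MulAction K V] [SMulCommClass G K V]
    {a : ι → G} {s : ι × Bool} {c : K} {v : V} (hc : c ≠ 0) (h : letter a s • v = c • v) :
    ∃ d : K, a s.1 • v = d • v := by
  rcases s with ⟨i, _ | _⟩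
  · refine ⟨c⁻¹, ?_⟩
    rw [eq_inv_smul_iff₀ hc, ← smul_comm, ← h]
    exact smul_inv_smul _ _
  · exact ⟨c, h⟩

section Wedge

variable {K : Type*} [Field K] {g : SpecialLinearGroup (Fin 2) K} {l : K} {p q : Fin 2 → K}

/-- The determinant form on `K²`, whose kernel in the second argument is the line spanned by the
first; the fixed lines of `g` are studied through the linear forms `wedge p`. -/
def wedge : LinearMap.BilinForm K (Fin 2 → K) := Matrix.toBilin' !![0, 1; -1, 0]

lemma wedge_apply (u v : Fin 2 → K) : wedge u v = u 0 * v 1 - u 1 * v 0 := by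
  simp only [wedge, Matrix.toBilin'_apply, of_apply, cons_val', cons_val_fin_one,
    Fin.sum_univ_two, cons_val_zero, cons_val_one]
  ring

lemma wedge_swap (u v : Fin 2 → K) : wedge u v = -wedge v u := by
  simp only [wedge_apply]
  ring

lemma wedge_smul_smul (g : SpecialLinearGroup (Fin 2) K) (u v : Fin 2 → K) :
    wedge (g • u) (g • v) = wedge u v := by
  have hdet := g.det_coe
  rw [det_fin_two] at hdet
  change wedge (g.1 *ᵥ u) (g.1 *ᵥ v) = wedge u v
  simp only [wedge_apply, mulVec, dotProduct, Fin.sum_univ_two]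
  linear_combination (u 0 * v 1 - u 1 * v 0) * hdet

lemma wedge_smul_eq_sub (p q v : Fin 2 → K) :
    wedge p q • v = wedge p v • q - wedge q v • p := by
  refine funext (Fin.forall_fin_two.2 ⟨?_, ?_⟩) <;>
  · simp only [Pi.smul_apply, Pi.sub_apply, smul_eq_mul, wedge_apply]
    ring

lemma exists_smul_eq_of_wedge_eq_zero (hp : p ≠ 0) (hpq : wedge p q = 0) :
    ∃ c : K, c • p = q := by
  by_contra! hne
  have hunit : IsUnit (Matrix.of ![p, q]) :=
    linearIndependent_rows_iff_isUnit.1 ((LinearIndependent.pair_iff' hp).2 hne)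
  rw [isUnit_iff_isUnit_det, det_fin_two] at hunit
  exact hunit.ne_zero (by simpa [wedge_apply] using hpq)

lemma smul_eq_smul_of_wedge_eq_zero (hp : p ≠ 0) (hgp : g • p = l • p) (hpq : wedge p q = 0) :
    g • q = l • q := by
  obtain ⟨c, rfl⟩ := exists_smul_eq_of_wedge_eq_zero hp hpq
  rw [smul_comm, hgp, smul_comm]

lemma mul_wedge_smul_of_smul_eq (hgp : g • p = l • p) (v : Fin 2 → K) :
    l * wedge p (g • v) = wedge p v := by
  rw [← wedge_smul_smul g p v, hgp, LinearMap.map_smul₂, smul_eq_mul]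

lemma wedge_smul_of_inv_smul_eq (hgq : g⁻¹ • q = l • q) (v : Fin 2 → K) :
    wedge q (g • v) = l * wedge q v := by
  rw [← mul_wedge_smul_of_smul_eq hgq, inv_smul_smul]

lemma pairwise_wedge_ne_zero {ι : Type*} {γ : ι → SpecialLinearGroup (Fin 2) K} {l : ι → K}
    {P : ι × Bool → Fin 2 → K} (hl : ∀ i, l i ≠ 0) (hγ : ∀ s, letter γ s • P s = l s.1 • P s)
    (hself : ∀ s, wedge (P s) (P (invLetter s)) ≠ 0)
    (hdisj : Pairwise fun i j => ¬ ∃ v : Fin 2 → K, v ≠ 0 ∧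
      (∃ c : K, γ i • v = c • v) ∧ ∃ d : K, γ j • v = d • v) :
    Pairwise fun s t => wedge (P s) (P t) ≠ 0 := by
  intro s t hst
  by_cases hfst : s.1 = t.1
  · exact eq_invLetter_of_ne hfst hst ▸ hself s
  · have hne (s) : P s ≠ 0 := fun h => hself s (by rw [h, map_zero, LinearMap.zero_apply])
    intro hwedge
    have hs : letter γ s • P t = l s.1 • P t :=
      smul_eq_smul_of_wedge_eq_zero (hne s) (hγ s) hwedge
    exact hdisj hfst ⟨P t, hne t, exists_smul_eq_of_letter_smul_eq (hl _) hs,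
      exists_smul_eq_of_letter_smul_eq (hl _) (hγ t)⟩

end Wedge

section Cone

variable {K : Type*} [NormedField K]

/-- The closed cone of `K²` over a ball of radius `ε` around the line of `p` in the projective line,
in the coordinate for which the line of `q` is at infinity. -/
def cone (ε : ℝ) (p q : Fin 2 → K) : Set (Fin 2 → K) := {v | ‖wedge p v‖ ≤ ε * ‖wedge q v‖}

variable {ε : ℝ} {p q p' q' v : Fin 2 → K}

lemma isClosed_cone (ε : ℝ) (p q : Fin 2 → K) : IsClosed (cone ε p q) := by
  have hcont (u : Fin 2 → K) : Continuous fun v => wedge u v := by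
    simp only [wedge_apply]
    fun_prop
  exact isClosed_le (hcont p).norm (continuous_const.mul (hcont q).norm)

lemma zero_mem_cone (ε : ℝ) (p q : Fin 2 → K) : 0 ∈ cone ε p q := by
  simp [cone]

lemma norm_wedge_le (u v : Fin 2 → K) : ‖wedge u v‖ ≤ 2 * ‖u‖ * ‖v‖ :=
  calc ‖wedge u v‖ ≤ ‖u 0‖ * ‖v 1‖ + ‖u 1‖ * ‖v 0‖ := by
        rw [wedge_apply, ← norm_mul, ← norm_mul]
        exact norm_sub_le _ _
    _ ≤ ‖u‖ * ‖v‖ + ‖u‖ * ‖v‖ := by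
        gcongr <;> apply norm_le_pi_norm
    _ = 2 * ‖u‖ * ‖v‖ := by ring

lemma eq_zero_of_mem_cone (hε : 0 ≤ ε) (hsmall : ε * (2 * (‖p'‖ * ‖q‖ + ‖q'‖ * ‖p‖)) < ‖wedge p q‖)
    (hp : v ∈ cone ε p p') (hq : v ∈ cone ε q q') : v = 0 := by
  by_contra hv
  have hbound : ‖wedge p q‖ * ‖v‖ ≤ ε * (2 * (‖p'‖ * ‖q‖ + ‖q'‖ * ‖p‖)) * ‖v‖ :=
    calc ‖wedge p q‖ * ‖v‖ = ‖wedge p v • q - wedge q v • p‖ := by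
          rw [← norm_smul, wedge_smul_eq_sub]
      _ ≤ ‖wedge p v‖ * ‖q‖ + ‖wedge q v‖ * ‖p‖ := by
          rw [← norm_smul, ← norm_smul]
          exact norm_sub_le _ _
      _ ≤ ε * (2 * ‖p'‖ * ‖v‖) * ‖q‖ + ε * (2 * ‖q'‖ * ‖v‖) * ‖p‖ := by
          gcongr
          · exact hp.trans (by gcongr; exact norm_wedge_le p' v)
          · exact hq.trans (by gcongr; exact norm_wedge_le q' v)
      _ = ε * (2 * (‖p'‖ * ‖q‖ + ‖q'‖ * ‖p‖)) * ‖v‖ := by ring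
  exact hbound.not_gt (mul_lt_mul_of_pos_right hsmall (norm_pos_iff.2 hv))

lemma eventually_mul_lt (C : ℝ) {d : ℝ} (hd : 0 < d) : ∀ᶠ ε in 𝓝[>] (0 : ℝ), ε * C < d := by
  have hlim : Tendsto (fun ε : ℝ => ε * C) (𝓝 0) (𝓝 0) := by
    simpa using (continuous_mul_const C).tendsto 0
  exact nhdsWithin_le_nhds (hlim.eventually_lt_const hd)

lemma eventually_cone_inter_subset (p' q' : Fin 2 → K) (hpq : wedge p q ≠ 0) :
    ∀ᶠ ε in 𝓝[>] (0 : ℝ), cone ε p p' ∩ cone ε q q' ⊆ {0} := by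
  filter_upwards [eventually_mul_lt _ (norm_pos_iff.2 hpq), self_mem_nhdsWithin]
    with ε hsmall hε v hv
  exact eq_zero_of_mem_cone (le_of_lt hε) hsmall hv.1 hv.2

lemma eventually_notMem_cone (q : Fin 2 → K) (hv : wedge p v ≠ 0) :
    ∀ᶠ ε in 𝓝[>] (0 : ℝ), v ∉ cone ε p q := by
  filter_upwards [eventually_mul_lt ‖wedge q v‖ (norm_pos_iff.2 hv)] with ε hε
  exact not_le.2 hε

lemma smul_mem_cone {g : SpecialLinearGroup (Fin 2) K} {l : K} (hε : 0 < ε) (hl : ε⁻¹ ≤ ‖l‖)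
    (hgp : g • p = l • p) (hgq : g⁻¹ • q = l • q) (hv : v ∉ cone ε q p) :
    g • v ∈ cone ε p q := by
  have hεl : 1 ≤ ε * ‖l‖ := by rwa [← inv_le_iff_one_le_mul₀' hε]
  have hp : ‖wedge p v‖ = ‖l‖ * ‖wedge p (g • v)‖ := by
    rw [← mul_wedge_smul_of_smul_eq hgp v, norm_mul]
  have hq : ‖wedge q (g • v)‖ = ‖l‖ * ‖wedge q v‖ := by
    rw [wedge_smul_of_inv_smul_eq hgq v, norm_mul]
  calc ‖wedge p (g • v)‖ ≤ (ε * ‖l‖) * ((ε * ‖l‖) * ‖wedge p (g • v)‖) := by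
        rw [← mul_assoc]
        exact le_mul_of_one_le_left (norm_nonneg _) (one_le_mul_of_one_le_of_one_le hεl hεl)
    _ = ε * ‖l‖ * (ε * ‖wedge p v‖) := by rw [hp]; ring
    _ ≤ ε * ‖l‖ * ‖wedge q v‖ := by gcongr; exact (not_le.1 hv).le
    _ = ε * ‖wedge q (g • v)‖ := by rw [hq, mul_assoc]

end Cone

lemma continuous_smul_const {n R : Type*} [Fintype n] [DecidableEq n] [CommRing R]
    [TopologicalSpace R] [IsTopologicalRing R] (v : n → R) :
    Continuous fun g : SpecialLinearGroup n R => g • v :=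
  Continuous.matrix_mulVec continuous_subtype_val continuous_const

section Loxodromic

variable {K : Type*} [NormedField K] {g : SpecialLinearGroup (Fin 2) K}

/-- Loxodromic elements of `SL(2, K)`. Both eigenvalues are required to lie in `K`. -/
def IsLoxodromic (g : SpecialLinearGroup (Fin 2) K) : Prop :=
  ∃ l₁ l₂ : K, ‖l₁‖ ≠ ‖l₂‖ ∧
    Module.End.HasEigenvalue (Matrix.toLin' (g : Matrix (Fin 2) (Fin 2) K)) l₁ ∧
    Module.End.HasEigenvalue (Matrix.toLin' (g : Matrix (Fin 2) (Fin 2) K)) l₂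

lemma exists_smul_eq_of_hasEigenvalue {l : K}
    (h : Module.End.HasEigenvalue (Matrix.toLin' (g : Matrix (Fin 2) (Fin 2) K)) l) :
    ∃ p : Fin 2 → K, p ≠ 0 ∧ g • p = l • p := by
  obtain ⟨p, hp⟩ := h.exists_hasEigenvector
  exact ⟨p, hp.2, hp.apply_eq_smul⟩

lemma IsLoxodromic.exists_eigenvectors (hg : IsLoxodromic g) :
    ∃ (l : K) (p q : Fin 2 → K), 1 < ‖l‖ ∧ wedge p q ≠ 0 ∧ g • p = l • p ∧ g⁻¹ • q = l • q := by
  obtain ⟨l, m, hlm, hl, hm⟩ := hg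
  wlog hlt : ‖m‖ < ‖l‖ generalizing l m
  · exact this m l hlm.symm hm hl (hlm.lt_or_gt.resolve_right hlt)
  obtain ⟨p, hp, hgp⟩ := exists_smul_eq_of_hasEigenvalue hl
  obtain ⟨q, hq, hgq⟩ := exists_smul_eq_of_hasEigenvalue hm
  have hpq : wedge p q ≠ 0 := fun h =>
    hlm (congrArg _ (smul_left_injective K hq
      ((smul_eq_smul_of_wedge_eq_zero hp hgp h).symm.trans hgq)))
  have hmul : l * m = 1 := by
    have h := mul_wedge_smul_of_smul_eq hgp q
    rw [hgq, map_smul, smul_eq_mul, ← mul_assoc] at h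
    exact mul_eq_right₀ hpq |>.1 h
  refine ⟨l, p, q, ?_, hpq, hgp, ?_⟩
  · have hnorm : ‖l‖ * ‖m‖ = 1 := by rw [← norm_mul, hmul, norm_one]
    nlinarith [norm_nonneg m]
  · rw [inv_smul_eq_iff, smul_comm, hgq, smul_smul, hmul, one_smul]

end Loxodromic

section Schottky

variable {ι K : Type*} [Finite ι] [NontriviallyNormedField K]
  {γ : ι → SpecialLinearGroup (Fin 2) K} {l : ι → K} {P : ι × Bool → Fin 2 → K}

lemma exists_pingPong_cones (hP : Pairwise fun s t => wedge (P s) (P t) ≠ 0) :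
    ∃ ε > 0, ∃ v, (∀ s, v ∉ cone ε (P s) (P (invLetter s))) ∧
      Pairwise fun s t =>
        cone ε (P s) (P (invLetter s)) ∩ cone ε (P t) (P (invLetter t)) ⊆ {0} := by
  obtain ⟨v, hv⟩ := Module.Dual.exists_forall_ne_zero_of_forall_exists (fun s => wedge (P s))
    fun s => ⟨P (invLetter s), hP (ne_invLetter s)⟩
  have hmiss : ∀ᶠ ε in 𝓝[>] (0 : ℝ), ∀ s, v ∉ cone ε (P s) (P (invLetter s)) :=
    eventually_all.2 fun s => eventually_notMem_cone _ (hv s)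
  have hinter : ∀ᶠ ε in 𝓝[>] (0 : ℝ), Pairwise fun s t =>
      cone ε (P s) (P (invLetter s)) ∩ cone ε (P t) (P (invLetter t)) ⊆ {0} :=
    eventually_all.2 fun s => eventually_all.2 fun t => eventually_all.2 fun hst =>
      eventually_cone_inter_subset _ _ (hP hst)
  obtain ⟨ε, ⟨hm, hi⟩, hε⟩ := ((hmiss.and hinter).and self_mem_nhdsWithin).exists
  exact ⟨ε, hε, v, hm, hi⟩

theorem exists_pow_discreteTopology_and_injective_lift (hl : ∀ i, 1 < ‖l i‖)
    (hP : Pairwise fun s t => wedge (P s) (P t) ≠ 0)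
    (hγ : ∀ s, letter γ s • P s = l s.1 • P s) :
    ∃ n : ℕ, 0 < n ∧ DiscreteTopology (Subgroup.closure (Set.range (γ ^ n))) ∧
      Function.Injective (FreeGroup.lift (γ ^ n)) := by
  obtain ⟨ε, hε, v, hv, hinter⟩ := exists_pingPong_cones hP
  have hlarge : ∀ᶠ n : ℕ in atTop, ∀ i, ε⁻¹ ≤ ‖l i ^ n‖ := by
    simp only [norm_pow]
    exact eventually_all.2 fun i =>
      (tendsto_pow_atTop_atTop_of_one_lt (hl i)).eventually_ge_atTop _
  obtain ⟨n, hn, hn0⟩ := (hlarge.and (eventually_gt_atTop 0)).exists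
  have heig (s) : letter (γ ^ n) s • P s = l s.1 ^ n • P s := by
    rw [letter_pow, pow_smul_eq_pow_smul (hγ s)]
  have hmaps (s y) (hy : y ∉ cone ε (P (invLetter s)) (P s)) :
      letter (γ ^ n) s • y ∈ cone ε (P s) (P (invLetter s)) := by
    refine smul_mem_cone hε (hn s.1) (heig s) ?_ hy
    rw [← letter_invLetter]
    exact heig (invLetter s)
  refine ⟨n, hn0, discreteTopology_closure_and_injective_lift (continuous_smul_const v)
    (fun s => isClosed_cone ε (P s) (P (invLetter s))) hv (fun s => hmaps s v ?_)
    fun s t hts y hy => ?_⟩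
  · simpa only [invLetter_invLetter] using hv (invLetter s)
  · by_cases hy0 : y = 0
    · simpa only [hy0, smul_zero] using zero_mem_cone _ _ _
    · refine hmaps s y fun hy' => hy0 (hinter hts ⟨hy, ?_⟩)
      rwa [invLetter_invLetter]

end Schottky

end Schottky

open Schottky in
theorem stmt_19_general {ι K : Type*} [Finite ι] [NontriviallyNormedField K]
    (γ : ι → SpecialLinearGroup (Fin 2) K) (hlox : ∀ i, IsLoxodromic (γ i))
    (hdisj : Pairwise fun i j => ¬ ∃ v : Fin 2 → K, v ≠ 0 ∧
      (∃ l : K, γ i • v = l • v) ∧ ∃ m : K, γ j • v = m • v) :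
    ∃ n : ℕ, 0 < n ∧ DiscreteTopology (Subgroup.closure (Set.range (γ ^ n))) ∧
      Function.Injective (FreeGroup.lift (γ ^ n)) := by
  choose l p q hl hpq hp hq using fun i => (hlox i).exists_eigenvectors
  let P (s : ι × Bool) : Fin 2 → K := cond s.2 (p s.1) (q s.1)
  have hγ (s) : letter γ s • P s = l s.1 • P s := by
    rcases s with ⟨i, _ | _⟩
    exacts [hq i, hp i]
  refine exists_pow_discreteTopology_and_injective_lift hl
    (pairwise_wedge_ne_zero (fun i => norm_pos_iff.1 (one_pos.trans (hl i))) hγ ?_ hdisj) hγ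
  rintro ⟨i, _ | _⟩
  exacts [wedge_swap (q i) (p i) ▸ neg_ne_zero.2 (hpq i), hpq i]

/-- Ping-pong lemma: if `γ₁, γ₂ ∈ SL(2, ℂ)` are loxodromic (two eigenvalues of distinct
absolute value) and have no common eigenvector (their fixed-point sets in `ℙ(ℂ²)` are
disjoint), then for some `n > 0` the subgroup generated by `γ₁ⁿ` and `γ₂ⁿ` is discrete
and free of rank 2. -/
theorem stmt_19 (γ₁ γ₂ : Matrix.SpecialLinearGroup (Fin 2) ℂ)
    (hlox₁ : ∃ l₁ l₂ : ℂ, ‖l₁‖ ≠ ‖l₂‖ ∧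
      Module.End.HasEigenvalue (Matrix.toLin' ((γ₁ : Matrix (Fin 2) (Fin 2) ℂ))) l₁ ∧
      Module.End.HasEigenvalue (Matrix.toLin' ((γ₁ : Matrix (Fin 2) (Fin 2) ℂ))) l₂)
    (hlox₂ : ∃ l₁ l₂ : ℂ, ‖l₁‖ ≠ ‖l₂‖ ∧
      Module.End.HasEigenvalue (Matrix.toLin' ((γ₂ : Matrix (Fin 2) (Fin 2) ℂ))) l₁ ∧
      Module.End.HasEigenvalue (Matrix.toLin' ((γ₂ : Matrix (Fin 2) (Fin 2) ℂ))) l₂)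
    (hdisj : ¬ ∃ v : Fin 2 → ℂ, v ≠ 0 ∧
      (∃ l : ℂ, Matrix.mulVec (γ₁ : Matrix (Fin 2) (Fin 2) ℂ) v = l • v) ∧
      (∃ m : ℂ, Matrix.mulVec (γ₂ : Matrix (Fin 2) (Fin 2) ℂ) v = m • v)) :
    ∃ n : ℕ, 0 < n ∧
      DiscreteTopology
        (Subgroup.closure {γ₁ ^ n, γ₂ ^ n} : Subgroup (Matrix.SpecialLinearGroup (Fin 2) ℂ)) ∧
      Function.Injective
        (FreeGroup.lift ![γ₁ ^ n, γ₂ ^ n] :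
          FreeGroup (Fin 2) →* Matrix.SpecialLinearGroup (Fin 2) ℂ) := by
  have hpow (n : ℕ) : ![γ₁, γ₂] ^ n = ![γ₁ ^ n, γ₂ ^ n] := by
    ext1 i
    fin_cases i <;> rfl
  have hpair : Pairwise fun i j => ¬ ∃ v : Fin 2 → ℂ, v ≠ 0 ∧
      (∃ l : ℂ, ![γ₁, γ₂] i • v = l • v) ∧ ∃ m : ℂ, ![γ₁, γ₂] j • v = m • v := by
    rintro i j hij ⟨v, hv, hi, hj⟩
    fin_cases i <;> fin_cases j
    exacts [hij rfl, hdisj ⟨v, hv, hi, hj⟩, hdisj ⟨v, hv, hj, hi⟩, hij rfl]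
  obtain ⟨n, hn, hdiscrete, hfree⟩ :=
    stmt_19_general ![γ₁, γ₂] (Fin.forall_fin_two.2 ⟨hlox₁, hlox₂⟩) hpair
  rw [hpow] at hdiscrete hfree
  rw [Matrix.range_cons_cons_empty] at hdiscrete
  exact ⟨n, hn, hdiscrete, hfree⟩
end
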